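/- arXiv:2604.21135 — 2 statements merged into one kernel-verified Lean document; each statement's English description precedes it below -/
import Mathlib

section
/- Let S(0,r) be the signed double star consisting of a positive central edge z₁z₂, together with two negative pendant edges z₁u₁, z₁u₂ attached at z₁, and r positive pendant edges z₂w₁,…,z₂w_r attached at z₂ (so S(0,r) is a (r+4, r+1, 2) signed graph). If r > 2, then S(0,r) is not additively graceful. -/
/-- A signed graph on vertex type `V`: a finite set of positive edges and a
finite set of negative edges, disjoint from one another, with no loops. -/
structure SignedGraph (V : Type) [DecidableEq V] where
  posEdges : Finset (Sym2 V)
  negEdges : Finset (Sym2 V)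
  disjoint : Disjoint posEdges negEdges
  pos_not_diag : ∀ e ∈ posEdges, ¬ e.IsDiag
  neg_not_diag : ∀ e ∈ negEdges, ¬ e.IsDiag

/-- Induced label on a positive edge: `|f u - f v|`. -/
def posLabel {V : Type} (f : V → ℕ) : Sym2 V → ℕ :=
  Sym2.lift ⟨fun u v => Nat.dist (f u) (f v), fun u v => Nat.dist_comm _ _⟩

/-- Induced label on a negative edge: `f u + f v`. -/
def negLabel {V : Type} (f : V → ℕ) : Sym2 V → ℕ :=
  Sym2.lift ⟨fun u v => f u + f v, fun u v => Nat.add_comm _ _⟩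

/-- `f` is an additively graceful labeling of the signed graph `S`:
it is an injection into `{0, 1, …, m + ⌈(n+1)/2⌉}` whose induced labels on the
positive edges are exactly `{1, …, m}` and on the negative edges exactly
`{1, …, n}`, where `m` (resp. `n`) is the number of positive (negative) edges.
(Note that `⌈(n+1)/2⌉ = (n+2)/2` with natural-number division.) -/
def IsAddGraceful {V : Type} [DecidableEq V] (S : SignedGraph V) (f : V → ℕ) : Prop :=
  Function.Injective f ∧
  (∀ v : V, f v ≤ S.posEdges.card + (S.negEdges.card + 2) / 2) ∧
  S.posEdges.image (posLabel f) = Finset.Icc 1 S.posEdges.card ∧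
  S.negEdges.image (negLabel f) = Finset.Icc 1 S.negEdges.card

/-- Vertex type of a double star: the two centers `z₁, z₂`, the `a` positive
pendant neighbours and `b` negative pendant neighbours of `z₁`, and the `c`
positive pendant neighbours of `z₂`. -/
abbrev DSV (a b c : ℕ) : Type := (Unit ⊕ Unit) ⊕ (Fin a ⊕ Fin b ⊕ Fin c)

/-- the first central vertex `z₁` -/
def z1 {a b c : ℕ} : DSV a b c := Sum.inl (Sum.inl ())
/-- the second central vertex `z₂` -/
def z2 {a b c : ℕ} : DSV a b c := Sum.inl (Sum.inr ())
/-- the end `vᵢ` of the `i`-th positive pendant edge at `z₁` -/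
def vv {a b c : ℕ} (i : Fin a) : DSV a b c := Sum.inr (Sum.inl i)
/-- the end `uᵢ` of the `i`-th negative pendant edge at `z₁` -/
def uu {a b c : ℕ} (i : Fin b) : DSV a b c := Sum.inr (Sum.inr (Sum.inl i))
/-- the end `wᵢ` of the `i`-th positive pendant edge at `z₂` -/
def ww {a b c : ℕ} (i : Fin c) : DSV a b c := Sum.inr (Sum.inr (Sum.inr i))

/-- The signed double star with a *positive* central edge `z₁z₂`,
`a` positive and `b` negative pendant edges at `z₁`, and `c` positive pendant
edges at `z₂`. -/
def doubleStarPos (a b c : ℕ) : SignedGraph (DSV a b c) where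
  posEdges :=
    {s(z1, z2)} ∪ Finset.univ.image (fun i : Fin a => s(z1, vv i)) ∪
      Finset.univ.image (fun i : Fin c => s(z2, ww i))
  negEdges := Finset.univ.image (fun i : Fin b => s(z1, uu i))
  disjoint := by
    rw [Finset.disjoint_left]
    intro e he1 he2
    simp only [Finset.mem_union, Finset.mem_singleton, Finset.mem_image,
      Finset.mem_univ, true_and] at he1 he2
    obtain ⟨j, rfl⟩ := he2
    rcases he1 with (h | ⟨i, h⟩) | ⟨i, h⟩ <;>
      simp [z1, z2, vv, uu, ww, Sym2.eq_iff] at h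
  pos_not_diag := by
    intro e he
    simp only [Finset.mem_union, Finset.mem_singleton, Finset.mem_image,
      Finset.mem_univ, true_and] at he
    rcases he with (rfl | ⟨i, rfl⟩) | ⟨i, rfl⟩ <;>
      simp [z1, z2, vv, ww, Sym2.mk_isDiag_iff]
  neg_not_diag := by
    intro e he
    simp only [Finset.mem_image, Finset.mem_univ, true_and] at he
    obtain ⟨i, rfl⟩ := he
    simp [z1, uu, Sym2.mk_isDiag_iff]


lemma ds_neg_card (r : ℕ) : (doubleStarPos 0 2 r).negEdges.card = 2 := by
  have h : Function.Injective (fun i : Fin 2 => (s(z1, uu i) : Sym2 (DSV 0 2 r))) := by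
    intro i j h
    simpa [z1, uu, Sym2.eq_iff] using h
  simp only [doubleStarPos]
  rw [Finset.card_image_of_injective _ h]
  simp

lemma ds_pos_card (r : ℕ) : (doubleStarPos 0 2 r).posEdges.card = r + 1 := by
  have h : Function.Injective (fun i : Fin r => (s(z2, ww i) : Sym2 (DSV 0 2 r))) := by
    intro i j h
    simpa [z2, ww, Sym2.eq_iff] using h
  simp only [doubleStarPos]
  rw [Finset.card_union_of_disjoint, Finset.card_image_of_injective _ h]
  · simp
    omega
  · rw [Finset.disjoint_left]
    intro e he1 he2
    simp at he1 he2
    subst he1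
    obtain ⟨i, h⟩ := he2
    simp [z1, z2, ww] at h

/-- The signed double star with positive central edge `z₁z₂`,
two negative pendant edges at `z₁` (and no positive pendants there), and `r`
positive pendant edges at `z₂`, is not additively graceful when `r > 2`. -/
theorem doubleStar_twoNeg_l0_not_addGraceful (r : ℕ) (hr : 2 < r) :
    ¬ ∃ f : DSV 0 2 r → ℕ, IsAddGraceful (doubleStarPos 0 2 r) f := by
  rintro ⟨f, hinj, hle, hpos, hneg⟩
  have hPinj : Set.InjOn (posLabel f) ((doubleStarPos 0 2 r).posEdges : Set _) := by
    apply Finset.card_image_iff.mp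
    rw [hpos]
    simp
  rw [ds_pos_card, ds_neg_card] at hle
  rw [ds_pos_card] at hpos
  rw [ds_neg_card] at hneg
  have m12 : s(z1, z2) ∈ (doubleStarPos 0 2 r).posEdges := by simp [doubleStarPos]
  have m2w (i : Fin r) : s(z2, ww i) ∈ (doubleStarPos 0 2 r).posEdges :=
    Finset.mem_union_right _ (Finset.mem_image_of_mem _ (Finset.mem_univ i))
  have l12 : posLabel f s(z1, z2) = Nat.dist (f z1) (f z2) := rfl
  have l2w (i : Fin r) : posLabel f s(z2, ww i) = Nat.dist (f z2) (f (ww i)) := rfl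
  -- negative labels
  have hu (i : Fin 2) : 1 ≤ f z1 + f (uu i) ∧ f z1 + f (uu i) ≤ 2 := by
    have : negLabel f s(z1, uu i) ∈ Finset.Icc 1 2 := by
      rw [← hneg]
      exact Finset.mem_image_of_mem _ (Finset.mem_image_of_mem _ (Finset.mem_univ i))
    exact Finset.mem_Icc.mp this
  have hu0 := hu 0
  have hu1 := hu 1
  have n01 : f (uu 0) ≠ f (uu 1) := fun h => by simpa [uu] using hinj h
  have n1u (i : Fin 2) : f z1 ≠ f (uu i) := fun h => by simpa [uu, z1] using hinj h
  have n10 := n1u 0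
  have n11 := n1u 1
  have n2u (i : Fin 2) : f z2 ≠ f (uu i) := fun h => by simpa [uu, z2] using hinj h
  have n20 := n2u 0
  have n21 := n2u 1
  have n12 : f z1 ≠ f z2 := fun h => by simpa [z1, z2] using hinj h
  have hz1 : f z1 = 0 := by omega
  -- surjectivity by counting
  have hsurj (k : ℕ) (h3 : 3 ≤ k) (hk : k ≤ r + 3) (hk2 : k ≠ f z2) :
      ∃ i : Fin r, f (ww i) = k := by
    let g : DSV 0 2 r → Fin (r + 4) := fun v => ⟨f v, by have := hle v; omega⟩
    have gi : Function.Injective g := fun a b h => hinj (by simpa [g] using h)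
    have gb : Function.Bijective g := by
      rw [Fintype.bijective_iff_injective_and_card]
      refine ⟨gi, ?_⟩
      simp
      omega
    obtain ⟨v, hv⟩ := gb.2 ⟨k, by omega⟩
    have hv : f v = k := by simpa [g] using hv
    rcases v with (⟨⟩ | ⟨⟩) | i | i | i
    · change f z1 = k at hv
      omega
    · change f z2 = k at hv
      omega
    · exact i.elim0
    · change f (uu i) = k at hv
      have := hu i
      omega
    · exact ⟨i, hv⟩
  have hz2 : f z2 ≤ r + 1 := by
    have : posLabel f s(z1, z2) ∈ Finset.Icc 1 (r + 1) := by
      rw [← hpos]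
      exact Finset.mem_image_of_mem _ m12
    rw [l12, Finset.mem_Icc, Nat.dist] at this
    omega
  by_cases h3 : f z2 = 3
  · obtain ⟨i, hi⟩ := hsurj 6 (by omega) (by omega) (by omega)
    have := hPinj m12 (m2w i) (by rw [l12, l2w, hz1, h3, hi]; rfl)
    simp [z1, z2, ww] at this
  · obtain ⟨i, hi⟩ := hsurj (f z2 - 1) (by omega) (by omega) (by omega)
    obtain ⟨j, hj⟩ := hsurj (f z2 + 1) (by omega) (by omega) (by omega)
    have := hPinj (m2w i) (m2w j) (by rw [l2w, l2w, hi, hj]; simp only [Nat.dist]; omega)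
    have hij : i = j := by simpa [z2, ww, Sym2.eq_iff] using this
    subst hij
    omega
end

section
/- Let S(2,r) be the signed double star consisting of a positive central edge z₁z₂, together with 2 positive pendant edges z₁v₁, z₁v₂ and two negative pendant edges z₁u₁, z₁u₂ attached at z₁, and r positive pendant edges z₂w₁,…,z₂w_r attached at z₂ (so S(2,r) is a (r+6, r+3, 2) signed graph). Then for every r ≥ 2, S(2,r) is additively graceful. -/
/-- The labeling: `z₁ ↦ 0`, `z₂ ↦ r+3`, `vᵢ ↦ r+1+i`, `uᵢ ↦ i+1`,
`w₀, w₁ ↦ r+4, r+5` and `wᵢ ↦ i+1` otherwise. -/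
def dsLab (r : ℕ) : DSV 2 2 r → ℕ
  | Sum.inl (Sum.inl _) => 0
  | Sum.inl (Sum.inr _) => r + 3
  | Sum.inr (Sum.inl i) => r + 1 + i.val
  | Sum.inr (Sum.inr (Sum.inl i)) => i.val + 1
  | Sum.inr (Sum.inr (Sum.inr i)) => if i.val < 2 then r + 4 + i.val else i.val + 1

lemma ds_card_pos (r : ℕ) : (doubleStarPos 2 2 r).posEdges.card = r + 3 := by
  unfold doubleStarPos
  simp only
  rw [Finset.card_union_of_disjoint, Finset.card_union_of_disjoint,
    Finset.card_image_of_injective, Finset.card_image_of_injective]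
  · simp; omega
  · intro i j h
    simpa [z1, z2, vv, ww, Sym2.eq_iff] using h
  · intro i j h
    simpa [z1, z2, vv, ww, Sym2.eq_iff] using h
  · simp [z1, z2, vv, ww, Sym2.eq_iff]
  · rw [Finset.disjoint_left]
    intro e he1 he2
    simp only [Finset.mem_union, Finset.mem_singleton, Finset.mem_image,
      Finset.mem_univ, true_and] at he1 he2
    obtain ⟨j, rfl⟩ := he2
    rcases he1 with h | ⟨i, h⟩ <;>
      simp [z1, z2, vv, ww, Sym2.eq_iff] at h

lemma ds_card_neg (r : ℕ) : (doubleStarPos 2 2 r).negEdges.card = 2 := by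
  unfold doubleStarPos
  simp only
  rw [Finset.card_image_of_injective]
  · simp
  · intro i j h
    simpa [z1, uu, Sym2.eq_iff] using h

/-- The signed double star with positive central edge `z₁z₂`,
`2` positive and `2` negative pendant edges at `z₁`, and `r` positive pendant
edges at `z₂`, is additively graceful for every `r ≥ 2`. -/
theorem doubleStar_twoNeg_l2_addGraceful (r : ℕ) (hr : 2 ≤ r) :
    ∃ f : DSV 2 2 r → ℕ, IsAddGraceful (doubleStarPos 2 2 r) f := by
  refine ⟨dsLab r, ?_, ?_, ?_, ?_⟩
  · rintro ((a | a) | a | a | a) ((b | b) | b | b | b) h <;>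
      simp only [dsLab] at h <;>
      first
        | rfl
        | (exfalso; split_ifs at h <;> omega)
        | (exfalso; omega)
        | (have : a = b := by
            apply Fin.ext
            first
              | omega
              | (split_ifs at h <;> omega)
           rw [this])
  · rw [ds_card_pos, ds_card_neg]
    rintro ((a | a) | a | a | a) <;> simp only [dsLab] <;>
      first
        | omega
        | (split_ifs <;> omega)
  · rw [ds_card_pos]
    ext k
    simp only [doubleStarPos, Finset.mem_image, Finset.mem_union, Finset.mem_singleton,
      Finset.mem_univ, true_and, Finset.mem_Icc]
    constructor
    · rintro ⟨e, (rfl | ⟨i, rfl⟩) | ⟨i, rfl⟩, rfl⟩ <;>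
        simp only [posLabel, Sym2.lift_mk, z1, z2, vv, ww, dsLab, Nat.dist] <;>
        first
          | omega
          | (split_ifs <;> omega)
    · rintro ⟨h1, h2⟩
      by_cases hk : k = r + 3
      · refine ⟨_, Or.inl (Or.inl rfl), ?_⟩
        simp only [posLabel, Sym2.lift_mk, z1, z2, dsLab, Nat.dist]
        omega
      by_cases hk' : r + 1 ≤ k
      · refine ⟨_, Or.inl (Or.inr ⟨⟨k - (r + 1), by omega⟩, rfl⟩), ?_⟩
        simp only [posLabel, Sym2.lift_mk, z1, vv, dsLab, Nat.dist]
        omega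
      by_cases hk2 : k ≤ 2
      · refine ⟨_, Or.inr ⟨⟨k - 1, by omega⟩, rfl⟩, ?_⟩
        simp only [posLabel, Sym2.lift_mk, z2, ww, dsLab, Nat.dist]
        split_ifs <;> omega
      · refine ⟨_, Or.inr ⟨⟨r + 2 - k, by omega⟩, rfl⟩, ?_⟩
        simp only [posLabel, Sym2.lift_mk, z2, ww, dsLab, Nat.dist]
        split_ifs <;> omega
  · rw [ds_card_neg]
    ext k
    simp only [doubleStarPos, Finset.mem_image, Finset.mem_univ, true_and, Finset.mem_Icc]
    constructor
    · rintro ⟨e, ⟨i, rfl⟩, rfl⟩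
      simp only [negLabel, Sym2.lift_mk, z1, uu, dsLab]
      omega
    · rintro ⟨h1, h2⟩
      refine ⟨_, ⟨⟨k - 1, by omega⟩, rfl⟩, ?_⟩
      simp only [negLabel, Sym2.lift_mk, z1, uu, dsLab]
      omega
end
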